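/- Let ζ ∈ (-1/2, ∞). Then there exist constants c₁, c₂, c₃, c₄ > 0 (depending only on ζ) such that for all r, s, t > 0: c₁ · (min{1, r/√t})^ζ · (min{1, s/√t})^ζ · (rs)^{-ζ} · t^{-1/2} · exp(-(r-s)²/(c₂ t)) ≤ p_ζ^{(2)}(t,r,s) ≤ c₃ · (min{1, r/√t})^ζ · (min{1, s/√t})^ζ · (rs)^{-ζ} · t^{-1/2} · exp(-(r-s)²/(c₄ t)). -/

import Mathlib

open MeasureTheory Real Set Filter

/-- Modified Bessel function of the first kind of order `ν`. -/
noncomputable def besselI (ν x : ℝ) : ℝ :=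
  ∑' k : ℕ, (x / 2) ^ (2 * (k : ℝ) + ν) / ((Nat.factorial k : ℝ) * Real.Gamma ((k : ℝ) + ν + 1))

/-- The Bessel heat kernel `p_ζ^{(2)}(t,r,s)`. -/
noncomputable def besselHeat (ζ t r s : ℝ) : ℝ :=
  (r * s) ^ ((1 : ℝ) / 2 - ζ) / (2 * t) * Real.exp (-(r ^ 2 + s ^ 2) / (4 * t)) *
    besselI (ζ - 1 / 2) (r * s / (2 * t))

theorem gamma_nat_add_half_eq_factorial (k : ℕ) :
    Gamma ((k : ℝ) + 1 / 2) = √π * (Nat.factorial (2 * k) : ℝ) / (4 ^ k * (Nat.factorial k : ℝ)) := by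
  induction k with
  | zero => rw [Nat.cast_zero, zero_add, Real.Gamma_one_half_eq]; simp
  | succ k ih =>
    have h : ((k + 1 : ℕ) : ℝ) + 1 / 2 = (k + 1 / 2 : ℝ) + 1 := by push_cast; ring
    rw [h, Real.Gamma_add_one (by positivity), ih, show 2 * (k + 1) = 2 * k + 1 + 1 by ring,
      Nat.factorial_succ, Nat.factorial_succ, Nat.factorial_succ]
    push_cast
    field_simp
    ring

theorem integrableOn_beta_kernel {α β : ℝ} (hα : 0 < α) (hβ : 0 < β) :
    IntegrableOn (fun w : ℝ => w ^ (α - 1) * (1 - w) ^ (β - 1)) (Ioo 0 1) ∧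
      ∫ w in Ioo (0 : ℝ) 1, w ^ (α - 1) * (1 - w) ^ (β - 1) =
        Gamma α * Gamma β / Gamma (α + β) := by
  have hb := ProbabilityTheory.beta_pos hα hβ
  have h := ProbabilityTheory.lintegral_betaPDF_eq_one hα hβ
  rw [ProbabilityTheory.lintegral_betaPDF] at h
  have hpos : ∀ᵐ w ∂(volume.restrict (Ioo (0 : ℝ) 1)),
      0 ≤ 1 / ProbabilityTheory.beta α β * w ^ (α - 1) * (1 - w) ^ (β - 1) := by
    filter_upwards [ae_restrict_mem measurableSet_Ioo] with w hw
    have h1 : 0 < 1 - w := by linarith [hw.2]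
    have h0 := hw.1
    positivity
  have hm : AEStronglyMeasurable
      (fun w : ℝ => 1 / ProbabilityTheory.beta α β * w ^ (α - 1) * (1 - w) ^ (β - 1))
      (volume.restrict (Ioo (0 : ℝ) 1)) := by
    apply Measurable.aestronglyMeasurable
    fun_prop
  have hi : IntegrableOn
      (fun w : ℝ => 1 / ProbabilityTheory.beta α β * w ^ (α - 1) * (1 - w) ^ (β - 1))
      (Ioo (0 : ℝ) 1) := by
    refine ⟨hm, ?_⟩
    rw [hasFiniteIntegral_iff_ofReal hpos, h]
    exact ENNReal.one_lt_top
  have hv : ∫ w in Ioo (0 : ℝ) 1,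
      1 / ProbabilityTheory.beta α β * w ^ (α - 1) * (1 - w) ^ (β - 1) = 1 := by
    rw [integral_eq_lintegral_of_nonneg_ae hpos hm, h, ENNReal.toReal_one]
  simp_rw [mul_assoc] at hi hv
  refine ⟨?_, ?_⟩
  · refine IntegrableOn.congr_fun (hi.const_mul (ProbabilityTheory.beta α β)) (fun w _ => ?_)
      measurableSet_Ioo
    field_simp
  · rw [integral_const_mul] at hv
    change _ = ProbabilityTheory.beta α β
    field_simp at hv
    linarith

theorem summable_besselI_of_nonneg {ν x : ℝ} (hν : 0 ≤ ν) (hx : 0 < x) :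
    Summable fun k : ℕ => (x / 2) ^ (2 * (k : ℝ) + ν) /
      ((Nat.factorial k : ℝ) * Gamma ((k : ℝ) + ν + 1)) := by
  have hG : ∀ k : ℕ, Gamma (ν + 1) ≤ Gamma ((k : ℝ) + ν + 1) := by
    intro k
    induction k with
    | zero => simp
    | succ k ih =>
      have hp : 0 < Gamma ((k : ℝ) + ν + 1) := Real.Gamma_pos_of_pos (by positivity)
      rw [show ((k + 1 : ℕ) : ℝ) + ν + 1 = ((k : ℝ) + ν + 1) + 1 by push_cast; ring,
        Real.Gamma_add_one (s := (k : ℝ) + ν + 1) (by positivity)]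
      have : (0 : ℝ) ≤ k := Nat.cast_nonneg k
      nlinarith
  have hp : 0 < Gamma (ν + 1) := Real.Gamma_pos_of_pos (by positivity)
  refine Summable.of_nonneg_of_le (fun k => ?_) (fun k => ?_)
    ((Real.summable_pow_div_factorial ((x / 2) ^ 2)).mul_left ((x / 2) ^ ν / Gamma (ν + 1)))
  · have := hp.trans_le (hG k)
    positivity
  · have e : (x / 2) ^ (2 * (k : ℝ) + ν) = ((x / 2) ^ 2) ^ k * (x / 2) ^ ν := by
      rw [Real.rpow_add (by positivity), ← pow_mul, ← Real.rpow_natCast]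
      push_cast; rfl
    rw [e, div_mul_div_comm, mul_comm ((x / 2) ^ ν), mul_comm (Gamma (ν + 1))]
    gcongr
    exact hG k

/-- Poisson's integral for the modified Bessel function, in the variable `w = 1 - u ^ 2`. -/
theorem besselI_eq_integral {ν x : ℝ} (hν : 0 ≤ ν) (hx : 0 < x) :
    besselI ν x = (x / 2) ^ ν / (√π * Gamma (ν + 1 / 2)) *
      ∫ w in Ioo (0 : ℝ) 1, w ^ (ν + 1 / 2 - 1) * (1 - w) ^ ((1 : ℝ) / 2 - 1) *
        cosh (x * √(1 - w)) := by
  have hg : 0 < Gamma (ν + 1 / 2) := Real.Gamma_pos_of_pos (by positivity)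
  have hpi : 0 < √π := by positivity
  set F : ℕ → ℝ → ℝ := fun k w => x ^ (2 * k) / (Nat.factorial (2 * k) : ℝ) *
    (w ^ (ν + 1 / 2 - 1) * (1 - w) ^ ((k : ℝ) + 1 / 2 - 1)) with hF
  have hFi : ∀ k, Integrable (F k) (volume.restrict (Ioo 0 1)) := fun k =>
    (integrableOn_beta_kernel (by positivity) (by positivity)).1.const_mul _
  have hFv : ∀ k : ℕ, ∫ w in Ioo (0 : ℝ) 1, F k w = (√π * Gamma (ν + 1 / 2) / (x / 2) ^ ν) *
      ((x / 2) ^ (2 * (k : ℝ) + ν) / ((Nat.factorial k : ℝ) * Gamma ((k : ℝ) + ν + 1))) := by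
    intro k
    have e : (x / 2) ^ (2 * (k : ℝ) + ν) = x ^ (2 * k) / 4 ^ k * (x / 2) ^ ν := by
      rw [Real.rpow_add (by positivity), show (4 : ℝ) = 2 ^ 2 by norm_num, ← pow_mul, ← div_pow,
        ← Real.rpow_natCast]
      push_cast; rfl
    have hk : 0 < Gamma ((k : ℝ) + ν + 1) := Real.Gamma_pos_of_pos (by positivity)
    rw [hF]
    simp only
    rw [integral_const_mul, (integrableOn_beta_kernel (by positivity) (by positivity)).2,
      gamma_nat_add_half_eq_factorial, e,
      show ν + 1 / 2 + ((k : ℝ) + 1 / 2) = (k : ℝ) + ν + 1 by ring]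
    field_simp
  have hFn : ∀ k : ℕ, ∫ w in Ioo (0 : ℝ) 1, ‖F k w‖ = ∫ w in Ioo (0 : ℝ) 1, F k w := by
    intro k
    refine setIntegral_congr_fun measurableSet_Ioo fun w hw => ?_
    have h1 : 0 < 1 - w := by linarith [hw.2]
    have h0 := hw.1
    exact Real.norm_of_nonneg (by simp only [hF]; positivity)
  have hs := summable_besselI_of_nonneg hν hx
  have key := hasSum_integral_of_summable_integral_norm hFi (by
    simp_rw [hFn, hFv]
    exact hs.mul_left _)
  simp_rw [hFv] at key
  have hsum : ∫ w in Ioo (0 : ℝ) 1, ∑' k, F k w = ∫ w in Ioo (0 : ℝ) 1,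
      w ^ (ν + 1 / 2 - 1) * (1 - w) ^ ((1 : ℝ) / 2 - 1) * cosh (x * √(1 - w)) := by
    refine setIntegral_congr_fun measurableSet_Ioo fun w hw => ?_
    have h1 : 0 < 1 - w := by linarith [hw.2]
    simp only [hF]
    rw [Real.cosh_eq_tsum, ← tsum_mul_left]
    congr 1
    ext k
    rw [mul_pow, pow_mul (√(1 - w)), Real.sq_sqrt h1.le,
      show (k : ℝ) + 1 / 2 - 1 = (k : ℝ) + (1 / 2 - 1) by ring, Real.rpow_add h1,
      Real.rpow_natCast]
    ring
  rw [hsum] at key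
  have := key.unique (hs.hasSum.mul_left _)
  rw [this]
  unfold besselI
  have hxν : 0 < (x / 2) ^ ν := by positivity
  field_simp

theorem integrableOn_poisson {ν : ℝ} (hν : 0 ≤ ν) (x : ℝ) :
    IntegrableOn (fun w : ℝ => w ^ (ν + 1 / 2 - 1) * (1 - w) ^ ((1 : ℝ) / 2 - 1) *
      cosh (x * √(1 - w))) (Ioo 0 1) := by
  have hb := (integrableOn_beta_kernel (show 0 < ν + 1 / 2 by positivity)
    (show (0 : ℝ) < 1 / 2 by positivity)).1
  refine hb.mul_bdd (c := cosh x) ?_ ?_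
  · apply Measurable.aestronglyMeasurable
    fun_prop
  · filter_upwards [ae_restrict_mem measurableSet_Ioo] with w hw
    rw [Real.norm_of_nonneg (Real.cosh_pos _).le, Real.cosh_le_cosh, abs_mul,
      abs_of_nonneg (Real.sqrt_nonneg _)]
    exact mul_le_of_le_one_right (abs_nonneg x) (Real.sqrt_le_one.2 (by linarith [hw.1]))

theorem rpow_mul_exp_neg_le {p x : ℝ} (hp : 0 < p) (hx : 0 < x) :
    exp (-(x / 4)) ≤ (4 * p) ^ p * x ^ (-p) := by
  have h : x / (4 * p) ≤ exp (x / (4 * p)) := by linarith [Real.add_one_le_exp (x / (4 * p))]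
  have h2 := Real.rpow_le_rpow (by positivity) h hp.le
  rw [← Real.exp_mul, show x / (4 * p) * p = x / 4 by field_simp,
    Real.div_rpow hx.le (by positivity)] at h2
  have hxp : 0 < x ^ p := by positivity
  have hpp : 0 < (4 * p) ^ p := by positivity
  rw [Real.rpow_neg hx.le, Real.exp_neg, ← div_eq_mul_inv, inv_le_comm₀ (exp_pos _) (by positivity),
    inv_div]
  exact h2

theorem integrableOn_rpow_mul_exp {a r : ℝ} (ha : 0 < a) (hr : 0 < r) :
    IntegrableOn (fun w : ℝ => w ^ (a - 1) * exp (-(r * w))) (Ioi 0) := by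
  have h := integrableOn_rpow_mul_exp_neg_mul_rpow (s := a - 1) (p := 1) (by linarith) one_pos hr
  simpa [neg_mul] using h

theorem cosh_mul_sqrt_le {x w : ℝ} (hx : 0 < x) (hw : w ∈ Ioo (0 : ℝ) 1) :
    cosh (x * √(1 - w)) ≤ exp x * exp (-(x / 2 * w)) := by
  have h1 : √(1 - w) ≤ 1 - w / 2 := by
    rw [Real.sqrt_le_left (by linarith [hw.2])]
    nlinarith [sq_nonneg w]
  have h0 : 0 ≤ x * √(1 - w) := by positivity
  rw [← Real.exp_add]
  calc cosh (x * √(1 - w)) ≤ exp (x * √(1 - w)) := by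
        rw [Real.cosh_eq]
        have : exp (-(x * √(1 - w))) ≤ exp (x * √(1 - w)) := Real.exp_le_exp.2 (by linarith)
        linarith
    _ ≤ exp (x + -(x / 2 * w)) := by
        apply Real.exp_le_exp.2
        nlinarith

theorem poisson_kernel_le {a x w : ℝ} (hx : 0 < x) (hw : w ∈ Ioo (0 : ℝ) 1) :
    w ^ (a - 1) * (1 - w) ^ ((1 : ℝ) / 2 - 1) * cosh (x * √(1 - w)) ≤
      2 * exp x * (w ^ (a - 1) * exp (-(x / 2 * w))) +
        exp x * exp (-(x / 4)) * (w ^ (a - 1) * (1 - w) ^ ((1 : ℝ) / 2 - 1)) := by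
  have h0 := hw.1
  have h1 : 0 < 1 - w := by linarith [hw.2]
  have hwa : 0 < w ^ (a - 1) := by positivity
  have hwb : 0 < (1 - w) ^ ((1 : ℝ) / 2 - 1) := by positivity
  have hc := cosh_mul_sqrt_le hx hw
  rcases le_total w (1 / 2) with h | h
  · have hb : (1 - w) ^ ((1 : ℝ) / 2 - 1) ≤ 2 := by
      calc (1 - w) ^ ((1 : ℝ) / 2 - 1) ≤ (1 / 2 : ℝ) ^ ((1 : ℝ) / 2 - 1) :=
            Real.rpow_le_rpow_of_nonpos (by norm_num) (by linarith) (by norm_num)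
        _ ≤ (1 / 2 : ℝ) ^ (-1 : ℝ) :=
            Real.rpow_le_rpow_of_exponent_ge (by norm_num) (by norm_num) (by norm_num)
        _ = 2 := by rw [Real.rpow_neg_one]; norm_num
    calc _ ≤ w ^ (a - 1) * 2 * (exp x * exp (-(x / 2 * w))) := by gcongr
      _ = 2 * exp x * (w ^ (a - 1) * exp (-(x / 2 * w))) := by ring
      _ ≤ _ := le_add_of_nonneg_right (by positivity)
  · have he : exp (-(x / 2 * w)) ≤ exp (-(x / 4)) := Real.exp_le_exp.2 (by nlinarith)
    calc _ ≤ w ^ (a - 1) * (1 - w) ^ ((1 : ℝ) / 2 - 1) * (exp x * exp (-(x / 4))) := by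
          gcongr
          exact hc.trans (by gcongr)
      _ = exp x * exp (-(x / 4)) * (w ^ (a - 1) * (1 - w) ^ ((1 : ℝ) / 2 - 1)) := by ring
      _ ≤ _ := le_add_of_nonneg_left (by positivity)

theorem poisson_integral_le {ν x : ℝ} (hν : 0 ≤ ν) (hx : 0 < x) :
    ∫ w in Ioo (0 : ℝ) 1, w ^ (ν + 1 / 2 - 1) * (1 - w) ^ ((1 : ℝ) / 2 - 1) *
        cosh (x * √(1 - w)) ≤
      (2 * 2 ^ (ν + 1 / 2) * Gamma (ν + 1 / 2) + (4 * (ν + 1 / 2)) ^ (ν + 1 / 2) *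
        (Gamma (ν + 1 / 2) * Gamma (1 / 2) / Gamma (ν + 1 / 2 + 1 / 2))) *
        x ^ (-(ν + 1 / 2)) * exp x := by
  have ha : 0 < ν + 1 / 2 := by positivity
  set a := ν + 1 / 2
  obtain ⟨hbi, hbv⟩ := integrableOn_beta_kernel ha (show (0 : ℝ) < 1 / 2 by positivity)
  have hgi := integrableOn_rpow_mul_exp ha (show 0 < x / 2 by positivity)
  have hgi' := hgi.mono_set (Ioo_subset_Ioi_self : Ioo (0 : ℝ) 1 ⊆ Ioi 0)
  have hgv : ∫ w in Ioo (0 : ℝ) 1, w ^ (a - 1) * exp (-(x / 2 * w)) ≤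
      2 ^ a * x ^ (-a) * Gamma a := by
    calc _ ≤ ∫ w in Ioi (0 : ℝ), w ^ (a - 1) * exp (-(x / 2 * w)) := by
          refine setIntegral_mono_set hgi ?_ Ioo_subset_Ioi_self.eventuallyLE
          filter_upwards [ae_restrict_mem measurableSet_Ioi] with w hw
          have : 0 < w := hw
          simp only [Pi.zero_apply]
          positivity
      _ = _ := by
          rw [Real.integral_rpow_mul_exp_neg_mul_Ioi ha (by positivity), one_div_div,
            Real.div_rpow (by norm_num) hx.le, Real.rpow_neg hx.le, div_eq_mul_inv]
  have hB : 0 < Gamma a * Gamma (1 / 2) / Gamma (a + 1 / 2) := by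
    have := Real.Gamma_pos_of_pos ha
    have := Real.Gamma_pos_of_pos (show (0 : ℝ) < 1 / 2 by norm_num)
    have := Real.Gamma_pos_of_pos (show (0 : ℝ) < a + 1 / 2 by positivity)
    positivity
  calc _ ≤ ∫ w in Ioo (0 : ℝ) 1, (2 * exp x * (w ^ (a - 1) * exp (-(x / 2 * w))) +
        exp x * exp (-(x / 4)) * (w ^ (a - 1) * (1 - w) ^ ((1 : ℝ) / 2 - 1))) :=
        setIntegral_mono_on (integrableOn_poisson hν x)
          ((hgi'.const_mul _).add (hbi.const_mul _)) measurableSet_Ioo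
          fun w hw => poisson_kernel_le hx hw
    _ = 2 * exp x * (∫ w in Ioo (0 : ℝ) 1, w ^ (a - 1) * exp (-(x / 2 * w))) +
        exp x * exp (-(x / 4)) * (Gamma a * Gamma (1 / 2) / Gamma (a + 1 / 2)) := by
        rw [integral_add (hgi'.const_mul _) (hbi.const_mul _), integral_const_mul,
          integral_const_mul, hbv]
    _ ≤ 2 * exp x * (2 ^ a * x ^ (-a) * Gamma a) + exp x * ((4 * a) ^ a * x ^ (-a)) *
        (Gamma a * Gamma (1 / 2) / Gamma (a + 1 / 2)) := by
        gcongr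
        exact rpow_mul_exp_neg_le ha hx
    _ = _ := by ring

theorem le_poisson_integral {ν x : ℝ} (hν : 0 ≤ ν) (hx : 1 ≤ x) :
    exp (-1) / 2 / (ν + 1 / 2) * x ^ (-(ν + 1 / 2)) * exp x ≤
      ∫ w in Ioo (0 : ℝ) 1, w ^ (ν + 1 / 2 - 1) * (1 - w) ^ ((1 : ℝ) / 2 - 1) *
        cosh (x * √(1 - w)) := by
  have ha : 0 < ν + 1 / 2 := by positivity
  have hx0 : 0 < x := by positivity
  set a := ν + 1 / 2
  have hsub : Ioo (0 : ℝ) (1 / x) ⊆ Ioo 0 1 :=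
    Ioo_subset_Ioo_right ((div_le_one hx0).2 hx)
  have hint := integrableOn_poisson hν x
  have hpi : IntegrableOn (fun w : ℝ => w ^ (a - 1)) (Ioo 0 (1 / x)) :=
    (intervalIntegral.integrableOn_Ioo_rpow_iff (by positivity)).2 (by linarith)
  have hpv : ∫ w in Ioo (0 : ℝ) (1 / x), w ^ (a - 1) = x ^ (-a) / a := by
    rw [← integral_Ioc_eq_integral_Ioo, ← intervalIntegral.integral_of_le (by positivity),
      integral_rpow (Or.inl (by linarith)), sub_add_cancel, Real.zero_rpow ha.ne', sub_zero,
      one_div, Real.inv_rpow hx0.le, Real.rpow_neg hx0.le]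
  have hnn : ∀ w ∈ Ioo (0 : ℝ) 1, 0 ≤ w ^ (a - 1) * (1 - w) ^ ((1 : ℝ) / 2 - 1) *
      cosh (x * √(1 - w)) := fun w hw => by
    have h0 := hw.1
    have h1 : 0 < 1 - w := by linarith [hw.2]
    have := Real.cosh_pos (x * √(1 - w))
    positivity
  calc exp (-1) / 2 / a * x ^ (-a) * exp x
      = ∫ w in Ioo (0 : ℝ) (1 / x), (exp (-1) / 2 * exp x) * w ^ (a - 1) := by
        rw [integral_const_mul, hpv]; ring
    _ ≤ ∫ w in Ioo (0 : ℝ) (1 / x), w ^ (a - 1) * (1 - w) ^ ((1 : ℝ) / 2 - 1) *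
        cosh (x * √(1 - w)) := by
        refine setIntegral_mono_on (hpi.const_mul _) (hint.mono_set hsub) measurableSet_Ioo
          fun w hw => ?_
        have h0 := hw.1
        have h1 : 0 < 1 - w := by linarith [(hsub hw).2]
        have hxw : x * w < 1 := by
          have := hw.2
          rwa [lt_div_iff₀ hx0, mul_comm] at this
        have hs : 1 - w ≤ √(1 - w) := Real.le_sqrt_of_sq_le (by nlinarith)
        have hb : 1 ≤ (1 - w) ^ ((1 : ℝ) / 2 - 1) :=
          Real.one_le_rpow_of_pos_of_le_one_of_nonpos h1 (by linarith) (by norm_num)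
        have hc : exp (-1) / 2 * exp x ≤ cosh (x * √(1 - w)) := by
          rw [Real.cosh_eq]
          have h2 : exp (-1) * exp x ≤ exp (x * √(1 - w)) := by
            rw [← Real.exp_add]
            exact Real.exp_le_exp.2 (by nlinarith)
          linarith [Real.exp_pos (-(x * √(1 - w)))]
        have hwa : 0 < w ^ (a - 1) := by positivity
        calc exp (-1) / 2 * exp x * w ^ (a - 1) = w ^ (a - 1) * 1 * (exp (-1) / 2 * exp x) := by ring
          _ ≤ _ := by gcongr
    _ ≤ _ := by
        refine setIntegral_mono_set hint ?_ hsub.eventuallyLE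
        filter_upwards [ae_restrict_mem measurableSet_Ioo] with w hw using hnn w hw

theorem poisson_integral_bounds_of_le_one {ν x : ℝ} (hν : 0 ≤ ν) (hx : 0 < x) (hx1 : x ≤ 1) :
    Gamma (ν + 1 / 2) * Gamma (1 / 2) / Gamma (ν + 1 / 2 + 1 / 2) ≤
        ∫ w in Ioo (0 : ℝ) 1, w ^ (ν + 1 / 2 - 1) * (1 - w) ^ ((1 : ℝ) / 2 - 1) *
          cosh (x * √(1 - w)) ∧
      ∫ w in Ioo (0 : ℝ) 1, w ^ (ν + 1 / 2 - 1) * (1 - w) ^ ((1 : ℝ) / 2 - 1) *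
          cosh (x * √(1 - w)) ≤
        Gamma (ν + 1 / 2) * Gamma (1 / 2) / Gamma (ν + 1 / 2 + 1 / 2) * cosh 1 := by
  obtain ⟨hbi, hbv⟩ := integrableOn_beta_kernel (show 0 < ν + 1 / 2 by positivity)
    (show (0 : ℝ) < 1 / 2 by positivity)
  rw [← hbv, ← integral_mul_const]
  have hpos : ∀ w ∈ Ioo (0 : ℝ) 1, 0 ≤ w ^ (ν + 1 / 2 - 1) * (1 - w) ^ ((1 : ℝ) / 2 - 1) :=
    fun w hw => by
      have h0 := hw.1
      have h1 : 0 < 1 - w := by linarith [hw.2]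
      positivity
  refine ⟨setIntegral_mono_on hbi (integrableOn_poisson hν x) measurableSet_Ioo fun w hw => ?_,
    setIntegral_mono_on (integrableOn_poisson hν x) (hbi.mul_const _) measurableSet_Ioo
      fun w hw => ?_⟩
  · exact le_mul_of_one_le_right (hpos w hw) (Real.one_le_cosh _)
  · refine mul_le_mul_of_nonneg_left ?_ (hpos w hw)
    rw [Real.cosh_le_cosh, abs_one, abs_of_nonneg (by positivity)]
    exact mul_le_one₀ hx1 (Real.sqrt_nonneg _) (Real.sqrt_le_one.2 (by linarith [hw.1]))

theorem besselI_bounds_of_nonneg {ν : ℝ} (hν : 0 ≤ ν) :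
    ∃ c C : ℝ, 0 < c ∧ 0 < C ∧
      (∀ x, 0 < x → x ≤ 1 → c * x ^ ν ≤ besselI ν x ∧ besselI ν x ≤ C * x ^ ν) ∧
      ∀ x, 1 ≤ x → c * (x ^ (-(1 : ℝ) / 2) * exp x) ≤ besselI ν x ∧
        besselI ν x ≤ C * (x ^ (-(1 : ℝ) / 2) * exp x) := by
  have ha : 0 < ν + 1 / 2 := by positivity
  have hg : 0 < Gamma (ν + 1 / 2) := Real.Gamma_pos_of_pos ha
  have hg2 : 0 < Gamma (1 / 2 : ℝ) := Real.Gamma_pos_of_pos (by norm_num)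
  have hg3 : 0 < Gamma (ν + 1 / 2 + 1 / 2) := Real.Gamma_pos_of_pos (by positivity)
  set K : ℝ := (1 / 2) ^ ν / (√π * Gamma (ν + 1 / 2)) with hK
  have hKpos : 0 < K := by positivity
  have hJ : ∀ x, 0 < x → besselI ν x = K * x ^ ν * ∫ w in Ioo (0 : ℝ) 1,
      w ^ (ν + 1 / 2 - 1) * (1 - w) ^ ((1 : ℝ) / 2 - 1) * cosh (x * √(1 - w)) := by
    intro x hx
    rw [besselI_eq_integral hν hx, hK, div_eq_mul_one_div x 2, Real.mul_rpow hx.le (by norm_num)]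
    ring
  have hxpow : ∀ x : ℝ, 0 < x → x ^ (-(1 : ℝ) / 2) = x ^ ν * x ^ (-(ν + 1 / 2)) := by
    intro x hx
    rw [← Real.rpow_add hx]
    ring_nf
  set B := Gamma (ν + 1 / 2) * Gamma (1 / 2) / Gamma (ν + 1 / 2 + 1 / 2) with hB
  have hBpos : 0 < B := by positivity
  set U := 2 * 2 ^ (ν + 1 / 2) * Gamma (ν + 1 / 2) + (4 * (ν + 1 / 2)) ^ (ν + 1 / 2) * B with hU
  have hUpos : 0 < U := by positivity
  set L := exp (-1) / 2 / (ν + 1 / 2) with hL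
  have hLpos : 0 < L := by positivity
  have hc1 := Real.cosh_pos 1
  refine ⟨K * min B L, K * max (B * cosh 1) U, by positivity, by positivity, ?_, ?_⟩
  · intro x hx hx1
    obtain ⟨h1, h2⟩ := poisson_integral_bounds_of_le_one hν hx hx1
    rw [hJ x hx, mul_right_comm, mul_right_comm K (max _ _)]
    exact ⟨by gcongr; exact (min_le_left _ _).trans h1,
      by gcongr; exact h2.trans (le_max_left _ _)⟩
  · intro x hx
    have hx0 : 0 < x := by positivity
    have h1 := le_poisson_integral hν hx
    have h2 := poisson_integral_le hν hx0
    rw [hJ x hx0, hxpow x hx0]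
    constructor
    · calc _ = K * x ^ ν * (min B L * x ^ (-(ν + 1 / 2)) * exp x) := by ring
        _ ≤ _ := by
          gcongr
          refine le_trans ?_ h1
          gcongr
          exact min_le_right _ _
    · calc _ ≤ K * x ^ ν * (max (B * cosh 1) U * x ^ (-(ν + 1 / 2)) * exp x) := by
            gcongr
            refine h2.trans ?_
            gcongr
            exact le_max_right _ _
        _ = _ := by ring

theorem besselI_recurrence {ν x : ℝ} (hν : -1 < ν) (hx : 0 < x) :
    besselI ν x = 2 * (ν + 1) / x * besselI (ν + 1) x + besselI (ν + 2) x := by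
  have hx2 : 0 < x / 2 := by positivity
  have h1 := (summable_besselI_of_nonneg (show 0 ≤ ν + 1 by linarith) hx).hasSum
  have h2 := (summable_besselI_of_nonneg (show 0 ≤ ν + 2 by linarith) hx).hasSum
  have h1' := (hasSum_nat_add_iff' 1).2 h1
  have h3 := (h1'.mul_left (2 * (ν + 1) / x)).add h2
  have hpos : ∀ k : ℕ, 0 < Gamma ((k : ℝ) + ν + 1) := fun k =>
    Real.Gamma_pos_of_pos (by have : (0 : ℝ) ≤ k := Nat.cast_nonneg k; linarith)
  have hne : ∀ k : ℕ, (k : ℝ) + ν + 1 ≠ 0 := fun k => by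
    have : (0 : ℝ) ≤ k := Nat.cast_nonneg k
    linarith
  have hpow : (x / 2) ^ (ν + 1) = (x / 2) ^ ν * (x / 2) := by
    rw [Real.rpow_add_one hx2.ne']
  have h4 : HasSum (fun k : ℕ => (x / 2) ^ (2 * ((k + 1 : ℕ) : ℝ) + ν) /
      ((Nat.factorial (k + 1) : ℝ) * Gamma (((k + 1 : ℕ) : ℝ) + ν + 1)))
      (2 * (ν + 1) / x * (besselI (ν + 1) x - (x / 2) ^ (ν + 1) / Gamma (ν + 2)) +
        besselI (ν + 2) x) := by
    rw [Finset.sum_range_one, Nat.cast_zero, mul_zero, zero_add, Nat.factorial_zero,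
      Nat.cast_one, one_mul, show ν + 1 + 1 = ν + 2 by ring] at h3
    refine h3.congr_fun fun k => ?_
    have e0 : ((k + 1 : ℕ) : ℝ) + (ν + 1) + 1 = (((k + 1 : ℕ) : ℝ) + ν + 1) + 1 := by ring
    have e1 : (k : ℝ) + (ν + 2) + 1 = (((k + 1 : ℕ) : ℝ) + ν + 1) + 1 := by push_cast; ring
    have e2 : (x / 2) ^ (2 * ((k + 1 : ℕ) : ℝ) + (ν + 1)) =
        (x / 2) ^ (2 * ((k + 1 : ℕ) : ℝ) + ν) * (x / 2) := by
      rw [← add_assoc, Real.rpow_add_one hx2.ne']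
    have e3 : (x / 2) ^ (2 * (k : ℝ) + (ν + 2)) = (x / 2) ^ (2 * ((k + 1 : ℕ) : ℝ) + ν) := by
      congr 1; push_cast; ring
    rw [e0, e1, e2, e3, Real.Gamma_add_one (hne (k + 1)), Nat.factorial_succ]
    have := hpos (k + 1)
    have := hne (k + 1)
    have : ((k : ℝ) + 1) ≠ 0 := by positivity
    push_cast at *
    field_simp
    ring
  have h5 := ((hasSum_nat_add_iff (f := fun k : ℕ => (x / 2) ^ (2 * (k : ℝ) + ν) /
      ((Nat.factorial k : ℝ) * Gamma ((k : ℝ) + ν + 1))) 1).1 h4).tsum_eq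
  have hg : 0 < Gamma (ν + 1) := by simpa using hpos 0
  have hν0 : ν + 1 ≠ 0 := by linarith
  have hsplit : Gamma (ν + 2) = (ν + 1) * Gamma (ν + 1) := by
    rw [← Real.Gamma_add_one hν0]; ring_nf
  unfold besselI at h5 ⊢
  rw [h5, hpow, hsplit]
  simp
  field_simp
  ring

theorem besselI_bounds {ν : ℝ} (hν : -1 < ν) :
    ∃ c C : ℝ, 0 < c ∧ 0 < C ∧ ∀ x, 0 < x →
      c * (min 1 x ^ (ν + 1 / 2) * x ^ (-(1 : ℝ) / 2) * exp x) ≤ besselI ν x ∧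
        besselI ν x ≤ C * (min 1 x ^ (ν + 1 / 2) * x ^ (-(1 : ℝ) / 2) * exp x) := by
  obtain ⟨c₁, C₁, hc₁, hC₁, hs₁, hl₁⟩ := besselI_bounds_of_nonneg (show 0 ≤ ν + 1 by linarith)
  obtain ⟨c₂, C₂, hc₂, hC₂, hs₂, hl₂⟩ := besselI_bounds_of_nonneg (show 0 ≤ ν + 2 by linarith)
  have hν1 : 0 < ν + 1 := by linarith
  refine ⟨min (2 * (ν + 1) * c₁ * exp (-1)) c₂, 2 * (ν + 1) * C₁ + C₂, by positivity,
    by positivity, fun x hx => ?_⟩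
  rw [besselI_recurrence hν hx]
  rcases le_total x 1 with h | h
  · obtain ⟨l1, u1⟩ := hs₁ x hx h
    obtain ⟨l2, u2⟩ := hs₂ x hx h
    have e : x ^ (ν + 1 / 2) * x ^ (-(1 : ℝ) / 2) = x ^ ν := by
      rw [← Real.rpow_add hx]; ring_nf
    have e1 : x ^ (ν + 1) = x ^ ν * x := Real.rpow_add_one hx.ne' _
    have e2 : x ^ (ν + 2) = x ^ ν * x ^ 2 := by
      rw [Real.rpow_add hx, Real.rpow_two]
    have hxν : 0 < x ^ ν := by positivity
    rw [min_eq_right h, e]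
    rw [e1] at l1 u1
    rw [e2] at l2 u2
    constructor
    · calc _ ≤ 2 * (ν + 1) * c₁ * exp (-1) * (x ^ ν * exp 1) := by
            gcongr
            exact min_le_left _ _
        _ = 2 * (ν + 1) / x * (c₁ * (x ^ ν * x)) := by
            rw [Real.exp_neg]; field_simp
        _ ≤ 2 * (ν + 1) / x * besselI (ν + 1) x := by gcongr
        _ ≤ _ := le_add_of_nonneg_right (le_trans (by positivity) l2)
    · calc _ ≤ 2 * (ν + 1) / x * (C₁ * (x ^ ν * x)) + C₂ * (x ^ ν * x ^ 2) := by gcongr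
        _ = (2 * (ν + 1) * C₁ + C₂ * x ^ 2) * (x ^ ν * 1) := by field_simp
        _ ≤ (2 * (ν + 1) * C₁ + C₂ * 1) * (x ^ ν * exp x) := by
            gcongr
            · exact pow_le_one₀ hx.le h
            · exact Real.one_le_exp hx.le
        _ = _ := by ring
  · obtain ⟨l1, u1⟩ := hl₁ x h
    obtain ⟨l2, u2⟩ := hl₂ x h
    rw [min_eq_left h, Real.one_rpow, one_mul]
    set E := x ^ (-(1 : ℝ) / 2) * exp x
    have hE : 0 < E := by positivity
    have hI : 0 ≤ besselI (ν + 1) x := le_trans (by positivity) l1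
    constructor
    · calc _ ≤ c₂ * E := by gcongr; exact min_le_right _ _
        _ ≤ besselI (ν + 2) x := l2
        _ ≤ _ := le_add_of_nonneg_left (by positivity)
    · calc _ ≤ 2 * (ν + 1) / 1 * (C₁ * E) + C₂ * E := by gcongr
        _ = _ := by ring

theorem min_one_mul_half_bounds {a b : ℝ} (ha : 0 < a) (hb : 0 < b) :
    min 1 a * min 1 b ≤ 2 * min 1 (a * b / 2) ∧
      min 1 (a * b / 2) ≤ (1 + |a - b|) * (min 1 a * min 1 b) := by
  have hd := abs_nonneg (a - b)
  have h1 := le_abs_self (a - b)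
  have h2 := neg_abs_le (a - b)
  have hab : 0 < a * b := by positivity
  constructor
  · rw [mul_min_of_nonneg _ _ (by norm_num : (0 : ℝ) ≤ 2)]
    refine le_min ?_ ?_
    · have := mul_le_one₀ (min_le_left 1 a) (by positivity) (min_le_left 1 b)
      linarith
    · calc _ ≤ a * b := by gcongr <;> exact min_le_right _ _
        _ = _ := by ring
  · rcases le_total a 1 with h | h <;> rcases le_total b 1 with h' | h'
    · rw [min_eq_right h, min_eq_right h']
      exact (min_le_right _ _).trans (by nlinarith)
    · rw [min_eq_right h, min_eq_left h']
      exact (min_le_right _ _).trans (by nlinarith)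
    · rw [min_eq_left h, min_eq_right h']
      exact (min_le_right _ _).trans (by nlinarith)
    · rw [min_eq_left h, min_eq_left h']
      exact (min_le_left _ _).trans (by linarith)

theorem rpow_le_gaussian {ρ d : ℝ} (p : ℝ) (hρ : 0 < ρ) (h1 : ρ ≤ 2 * (1 + d))
    (h2 : ρ⁻¹ ≤ 2 * (1 + d)) (hd : 0 ≤ d) :
    ρ ^ p ≤ 2 ^ |p| * exp (2 * p ^ 2) * exp (d ^ 2 / 8) := by
  have hρp : ρ ^ p ≤ (2 * (1 + d)) ^ |p| := by
    rcases le_total 0 p with hp | hp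
    · rw [abs_of_nonneg hp]
      exact Real.rpow_le_rpow hρ.le h1 hp
    · rw [abs_of_nonpos hp, ← neg_neg p, neg_neg (-p), Real.rpow_neg hρ.le, ← Real.inv_rpow hρ.le]
      exact Real.rpow_le_rpow (by positivity) h2 (by linarith)
  have he : (1 + d) ^ |p| ≤ exp (2 * p ^ 2) * exp (d ^ 2 / 8) := by
    calc (1 + d) ^ |p| ≤ exp d ^ |p| :=
          Real.rpow_le_rpow (by positivity) (by linarith [Real.add_one_le_exp d]) (abs_nonneg p)
      _ = exp (d * |p|) := by rw [← Real.exp_mul]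
      _ ≤ exp (2 * p ^ 2 + d ^ 2 / 8) :=
          Real.exp_le_exp.2 (by nlinarith [sq_nonneg (d - 4 * |p|), sq_abs p])
      _ = _ := Real.exp_add _ _
  rw [Real.mul_rpow (by norm_num) (by positivity)] at hρp
  calc _ ≤ _ := hρp
    _ ≤ 2 ^ |p| * (exp (2 * p ^ 2) * exp (d ^ 2 / 8)) := by gcongr
    _ = _ := by ring

theorem min_one_mul_half_rpow_bounds {a b : ℝ} (ζ : ℝ) (ha : 0 < a) (hb : 0 < b) :
    (2 ^ |ζ| * exp (2 * ζ ^ 2))⁻¹ * exp (-((a - b) ^ 2 / 8)) * (min 1 a ^ ζ * min 1 b ^ ζ) ≤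
        min 1 (a * b / 2) ^ ζ ∧
      min 1 (a * b / 2) ^ ζ ≤
        2 ^ |ζ| * exp (2 * ζ ^ 2) * exp ((a - b) ^ 2 / 8) * (min 1 a ^ ζ * min 1 b ^ ζ) := by
  obtain ⟨h1, h2⟩ := min_one_mul_half_bounds ha hb
  have hd := abs_nonneg (a - b)
  have hm : 0 < min 1 a * min 1 b := by positivity
  have hn : 0 < min 1 (a * b / 2) := by positivity
  set m := min 1 a * min 1 b with hmdef
  set n := min 1 (a * b / 2)
  have hmζ : min 1 a ^ ζ * min 1 b ^ ζ = m ^ ζ := by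
    rw [Real.mul_rpow (by positivity) (by positivity)]
  have hnm : n / m ≤ 2 * (1 + |a - b|) := by
    rw [div_le_iff₀ hm]
    nlinarith [mul_nonneg hd hm.le]
  have hmn : m / n ≤ 2 * (1 + |a - b|) := by
    rw [div_le_iff₀ hn]
    nlinarith [mul_nonneg hd hn.le]
  have k1 := rpow_le_gaussian ζ (div_pos hn hm) hnm (by rwa [inv_div]) hd
  have k2 := rpow_le_gaussian ζ (div_pos hm hn) hmn (by rwa [inv_div]) hd
  rw [sq_abs, Real.div_rpow (by positivity) (by positivity)] at k1 k2
  have hmp : 0 < m ^ ζ := by positivity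
  have hnp : 0 < n ^ ζ := by positivity
  rw [div_le_iff₀ (by positivity)] at k1 k2
  rw [hmζ]
  refine ⟨?_, k1⟩
  rw [Real.exp_neg, ← mul_inv, inv_mul_le_iff₀ (by positivity)]
  exact k2

theorem besselHeat_eq {ζ r s t : ℝ} (hr : 0 < r) (hs : 0 < s) (ht : 0 < t) :
    besselHeat ζ t r s = (1 / √2) * ((r * s) ^ (-ζ) * t ^ (-(1 : ℝ) / 2) *
      exp (-((r / √t - s / √t) ^ 2 / 4))) *
      (besselI (ζ - 1 / 2) (r / √t * (s / √t) / 2) /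
        ((r / √t * (s / √t) / 2) ^ (-(1 : ℝ) / 2) * exp (r / √t * (s / √t) / 2))) := by
  have hst : 0 < √t := by positivity
  have hss : √t * √t = t := Real.mul_self_sqrt ht.le
  have hx : r / √t * (s / √t) / 2 = r * s / (2 * t) := by
    rw [div_mul_div_comm, hss]; field_simp
  have hsq : (r / √t - s / √t) ^ 2 = (r - s) ^ 2 / t := by
    rw [← sub_div, div_pow, Real.sq_sqrt ht.le]
  have hP : 0 < r * s := by positivity
  rw [hx, hsq]
  unfold besselHeat
  have e1 : exp (-((r - s) ^ 2 / t / 4)) =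
      exp (-(r ^ 2 + s ^ 2) / (4 * t)) * exp (r * s / (2 * t)) := by
    rw [← Real.exp_add]
    congr 1
    field_simp
    ring
  have hh : ∀ y : ℝ, 0 < y → y ^ (-(1 : ℝ) / 2) = 1 / √y := fun y hy => by
    rw [Real.sqrt_eq_rpow, neg_div, Real.rpow_neg hy.le, ← one_div]
  rw [e1, hh t ht, hh _ (by positivity), Real.sqrt_div hP.le,
    Real.sqrt_mul (show (0 : ℝ) ≤ 2 by norm_num),
    sub_eq_add_neg, Real.rpow_add hP, ← Real.sqrt_eq_rpow]
  have : 0 < √(r * s) := by positivity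
  field_simp
  rw [Real.sq_sqrt (by norm_num), Real.sq_sqrt ht.le]
  ring

theorem stmt1 (ζ : ℝ) (hζ : -1/2 < ζ) :
    ∃ c₁ c₂ c₃ c₄ : ℝ, 0 < c₁ ∧ 0 < c₂ ∧ 0 < c₃ ∧ 0 < c₄ ∧
      ∀ r s t : ℝ, 0 < r → 0 < s → 0 < t →
        c₁ * (min 1 (r / Real.sqrt t)) ^ ζ * (min 1 (s / Real.sqrt t)) ^ ζ * (r * s) ^ (-ζ)
              * t ^ (-(1 : ℝ) / 2) * Real.exp (-(r - s) ^ 2 / (c₂ * t))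
            ≤ besselHeat ζ t r s ∧
          besselHeat ζ t r s
            ≤ c₃ * (min 1 (r / Real.sqrt t)) ^ ζ * (min 1 (s / Real.sqrt t)) ^ ζ * (r * s) ^ (-ζ)
              * t ^ (-(1 : ℝ) / 2) * Real.exp (-(r - s) ^ 2 / (c₄ * t)) := by
  obtain ⟨c, C, hc, hC, hI⟩ := besselI_bounds (show -1 < ζ - 1 / 2 by linarith)
  set D : ℝ := 2 ^ |ζ| * exp (2 * ζ ^ 2) with hD
  have hDpos : 0 < D := by positivity
  refine ⟨1 / √2 * c * D⁻¹, 8 / 3, 1 / √2 * C * D, 8, by positivity, by norm_num, by positivity,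
    by norm_num, fun r s t hr hs ht => ?_⟩
  have hst : 0 < √t := by positivity
  have ha : 0 < r / √t := by positivity
  have hb : 0 < s / √t := by positivity
  have hsq : (r / √t - s / √t) ^ 2 = (r - s) ^ 2 / t := by
    rw [← sub_div, div_pow, Real.sq_sqrt ht.le]
  rw [besselHeat_eq hr hs ht]
  obtain ⟨m1, m2⟩ := min_one_mul_half_rpow_bounds ζ ha hb
  have hx : 0 < r / √t * (s / √t) / 2 := by positivity
  obtain ⟨i1, i2⟩ := hI _ hx
  rw [sub_add_cancel] at i1 i2
  rw [← hD] at m1 m2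
  have el : exp (-(r - s) ^ 2 / (8 / 3 * t)) =
      exp (-((r / √t - s / √t) ^ 2 / 4)) * exp (-((r / √t - s / √t) ^ 2 / 8)) := by
    rw [← Real.exp_add, hsq]
    congr 1
    field_simp
    ring
  have eu : exp (-(r - s) ^ 2 / (8 * t)) =
      exp (-((r / √t - s / √t) ^ 2 / 4)) * exp ((r / √t - s / √t) ^ 2 / 8) := by
    rw [← Real.exp_add, hsq]
    congr 1
    field_simp
    ring
  rw [el, eu]
  set a := r / √t
  set b := s / √t
  set x := a * b / 2
  set G := exp (-((a - b) ^ 2 / 4))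
  set W := x ^ (-(1 : ℝ) / 2) * exp x with hW
  have hWpos : 0 < W := by positivity
  have q1 : c * min 1 x ^ ζ ≤ besselI (ζ - 1 / 2) x / W := by
    rw [le_div_iff₀ hWpos]
    exact le_trans (le_of_eq (by rw [hW]; ring)) i1
  have q2 : besselI (ζ - 1 / 2) x / W ≤ C * min 1 x ^ ζ := by
    rw [div_le_iff₀ hWpos]
    exact i2.trans (le_of_eq (by rw [hW]; ring))
  set R := (r * s) ^ (-ζ) * t ^ (-(1 : ℝ) / 2) * G with hR
  have hRpos : 0 < R := by positivity
  constructor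
  · calc _ = 1 / √2 * R * (c * (D⁻¹ * exp (-((a - b) ^ 2 / 8)) * (min 1 a ^ ζ * min 1 b ^ ζ))) := by
          rw [hR]; ring
      _ ≤ 1 / √2 * R * (c * min 1 x ^ ζ) := by gcongr
      _ ≤ _ := by gcongr
  · calc _ ≤ 1 / √2 * R * (C * min 1 x ^ ζ) := by gcongr
      _ ≤ 1 / √2 * R * (C * (D * exp ((a - b) ^ 2 / 8) * (min 1 a ^ ζ * min 1 b ^ ζ))) := by gcongr
      _ = _ := by rw [hR]; ring
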